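/- Let F be the distribution function of a probability measure on ℝ satisfying Condition A. Then L(F) = sup_{θ ∈ ℝ, ψ ∈ SC₀} Ψ(θ, ψ, F) is finite, and the supremum is attained: there exist θ*(F) ∈ ℝ and ψ*(F) ∈ SC₀ with Ψ(θ*(F), ψ*(F), F) = L(F). -/

import Mathlib

open MeasureTheory Filter Set
open scoped ENNReal NNReal

noncomputable section

/-- `exp` of an extended real number, valued in `ℝ≥0∞`. -/
def expE (y : EReal) : ℝ≥0∞ :=
  if y = ⊥ then 0 else if y = ⊤ then ⊤ else ENNReal.ofReal (Real.exp y.toReal)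

/-- Truncation of an extended real number to `ℝ≥0∞` (negative values go to `0`). -/
def toENN (y : EReal) : ℝ≥0∞ :=
  if y = ⊤ then ⊤ else ENNReal.ofReal y.toReal

/-- Signed (upper-minus-lower) integral of an `EReal`-valued function against a measure. -/
def eIntegral (μ : Measure ℝ) (ψ : ℝ → EReal) : EReal :=
  ((∫⁻ x, toENN (ψ x) ∂μ : ℝ≥0∞) : EReal) - ((∫⁻ x, toENN (-(ψ x)) ∂μ : ℝ≥0∞) : EReal)

/-- Concavity for `EReal`-valued functions on `ℝ`. -/
def EConcave (ψ : ℝ → EReal) : Prop :=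
  ∀ x y : ℝ, ∀ t : ℝ, 0 ≤ t → t ≤ 1 →
    ((t : EReal) * ψ x + (((1 - t) : ℝ) : EReal) * ψ y) ≤ ψ (t * x + (1 - t) * y)

/-- The class `SC₀` of proper, closed (upper semicontinuous), concave functions
`ℝ → [−∞, ∞)` that are symmetric about `0`. -/
def memSC0 (ψ : ℝ → EReal) : Prop :=
  (∀ x, ψ x < ⊤) ∧ (∃ x, ψ x ≠ ⊥) ∧ UpperSemicontinuous ψ ∧ EConcave ψ ∧ ∀ x, ψ (-x) = ψ x

/-- The criterion function `Ψ(θ, ψ, F) = ∫ ψ(x − θ) dμ(x) − ∫ e^{ψ(x)} dx`. -/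
def Psi (θ : ℝ) (ψ : ℝ → EReal) (μ : Measure ℝ) : EReal :=
  eIntegral μ (fun x => ψ (x - θ)) - ((∫⁻ x, expE (ψ x) : ℝ≥0∞) : EReal)

/-- `L(θ; F) = sup_{ψ ∈ SC₀} Ψ(θ, ψ, F)`. -/
def Ltheta (θ : ℝ) (μ : Measure ℝ) : EReal :=
  ⨆ ψ ∈ {ψ : ℝ → EReal | memSC0 ψ}, Psi θ ψ μ

/-- `L(F) = sup_{θ ∈ ℝ, ψ ∈ SC₀} Ψ(θ, ψ, F)`. -/
def Lsup (μ : Measure ℝ) : EReal := ⨆ θ : ℝ, Ltheta θ μ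

/-- Condition A: `μ` is a probability measure that is not a point mass,
with a finite first absolute moment. -/
def CondA (μ : Measure ℝ) : Prop :=
  IsProbabilityMeasure μ ∧ (∀ x : ℝ, μ ≠ Measure.dirac x) ∧
    (∫⁻ x, ENNReal.ofReal |x| ∂μ) < ⊤

/-- The empirical measure of the data `X₁, …, Xₙ`. -/
def empMeas {n : ℕ} (X : Fin n → ℝ) : Measure ℝ :=
  ((n : ℝ≥0∞))⁻¹ • ∑ i : Fin n, Measure.dirac (X i)

/-- The empirical measure of the first `n` entries of a sequence. -/
def empSeq (X : ℕ → ℝ) (n : ℕ) : Measure ℝ :=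
  ((n : ℝ≥0∞))⁻¹ • ∑ i ∈ Finset.range n, Measure.dirac (X i)

/-- The density `e^ψ` as a real-valued function. -/
def gReal (ψ : ℝ → EReal) (x : ℝ) : ℝ := (expE (ψ x)).toReal

/-- A knot of a concave function `ψ`: a point where the left and right derivatives
differ, or a boundary point of `dom ψ = {ψ > −∞}`. -/
def IsKnot (ψ : ℝ → EReal) (x : ℝ) : Prop :=
  x ∈ frontier {y : ℝ | ψ y ≠ ⊥} ∨
    derivWithin (fun y => (ψ y).toReal) (Set.Iio x) x ≠
      derivWithin (fun y => (ψ y).toReal) (Set.Ioi x) x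

/-- The class `𝒞` of proper closed concave functions `ℝ → [−∞, ∞)`. -/
def memC (φ : ℝ → EReal) : Prop :=
  (∀ x, φ x < ⊤) ∧ (∃ x, φ x ≠ ⊥) ∧ UpperSemicontinuous φ ∧ EConcave φ

/-- The criterion function `ω(φ, F) = ∫ φ dμ − ∫ e^{φ(x)} dx`. -/
def omegaF (φ : ℝ → EReal) (μ : Measure ℝ) : EReal :=
  eIntegral μ φ - ((∫⁻ x, expE (φ x) : ℝ≥0∞) : EReal)

/-- `(θ, ψ)` maximizes `Ψ(·, ·, μ)` over `ℝ × SC₀`. -/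
def IsMaximizer (θ : ℝ) (ψ : ℝ → EReal) (μ : Measure ℝ) : Prop :=
  memSC0 ψ ∧ ∀ (θ' : ℝ) (ψ' : ℝ → EReal), memSC0 ψ' → Psi θ' ψ' μ ≤ Psi θ ψ μ

/-- Condition B: the `θ`-component of a maximizer of `Ψ(·, ·, μ)` is unique. -/
def CondB (μ : Measure ℝ) : Prop :=
  ∀ (θ₁ θ₂ : ℝ) (ψ₁ ψ₂ : ℝ → EReal),
    IsMaximizer θ₁ ψ₁ μ → IsMaximizer θ₂ ψ₂ μ → θ₁ = θ₂

/-- `J(F) = {x : 0 < F(x) < 1}`. -/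
def Jset (μ : Measure ℝ) : Set ℝ := {x : ℝ | 0 < μ (Set.Iic x) ∧ μ (Set.Iic x) < 1}

/-- The Hellinger distance between two densities. -/
def Hdist (f g : ℝ → ℝ) : ℝ :=
  Real.sqrt ((1 / 2) * ∫ x, (Real.sqrt (f x) - Real.sqrt (g x)) ^ 2)

/-- Finite Fisher information for location: `g` is a.e. differentiable with
square-integrable score. -/
def FiniteFisher (g : ℝ → ℝ) : Prop :=
  ∃ D : ℝ → ℝ, (∀ᵐ x : ℝ, HasDerivAt g (D x) x) ∧
    (∫⁻ x, ENNReal.ofReal ((D x) ^ 2 / g x)) < ⊤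

/-- The symmetrization `μ^{sym}_θ = (μ + R_θ#μ)/2` of a measure about `θ`. -/
def symMeas (θ : ℝ) (μ : Measure ℝ) : Measure ℝ :=
  ((2 : ℝ≥0∞))⁻¹ • (μ + Measure.map (fun x => 2 * θ - x) μ)

end

theorem sc0_anti {ψ : ℝ → EReal} (h : memSC0 ψ) {x y : ℝ} (hxy : |x| ≤ |y|) : ψ y ≤ ψ x := by
  obtain ⟨htop, -, -, hc, hs⟩ := h
  by_cases hy : y = 0
  · have : x = 0 := by subst hy; simpa using hxy
    rw [hy, this]
  have hr : |x / y| ≤ 1 := by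
    rw [abs_div]; exact div_le_one_of_le₀ hxy (abs_nonneg _)
  rw [abs_le] at hr
  have := hc y (-y) ((1 + x / y) / 2) (by linarith) (by linarith)
  have e : (1 + x / y) / 2 * y + (1 - (1 + x / y) / 2) * (-y) = x := by field_simp; ring
  rw [e, hs] at this
  refine le_trans ?_ this
  rcases h0 : ψ y with _ | _ | a
  · exact bot_le
  · exact absurd h0 (htop y).ne
  · change ((a : ℝ) : EReal) ≤ ((_ : ℝ) : EReal) * ((a : ℝ) : EReal) + ((_ : ℝ) : EReal) * ((a : ℝ) : EReal)
    norm_cast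
    apply le_of_eq; ring

theorem sc0_le0 {ψ : ℝ → EReal} (h : memSC0 ψ) (x : ℝ) : ψ x ≤ ψ 0 :=
  sc0_anti h (by simp)

theorem limit_exists (ψ : ℕ → ℝ → EReal) (hψ : ∀ n, memSC0 (ψ n)) (A K : ℝ)
    (hA : ∀ n, ψ n 0 ≤ A) (hK : ∀ n, (K : EReal) ≤ ψ n 0) :
    ∃ φ : ℕ → ℕ, StrictMono φ ∧ ∃ ψ' : ℝ → EReal, memSC0 ψ' ∧ ψ' 0 ≤ A ∧
      (∀ (z : ℝ) (zn : ℕ → ℝ), Tendsto zn atTop (nhds z) →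
        limsup (fun n => ψ (φ n) (zn n)) atTop ≤ ψ' z) ∧
      ∀ᵐ x : ℝ, ψ' x ≤ liminf (fun n => ψ (φ n) x) atTop := by
  obtain ⟨h, φ, hφ, hlim⟩ := CompactSpace.tendsto_subseq
    (fun n => fun q : ℚ => ψ n (max (q : ℝ) 0))
  have hl : ∀ q : ℚ, Tendsto (fun n => ψ (φ n) (max (q : ℝ) 0)) atTop (nhds (h q)) := by
    intro q
    exact (tendsto_pi_nhds.1 hlim) q
  have habs : ∀ q : ℚ, |max (q : ℝ) 0| = max (q : ℝ) 0 := fun q => abs_of_nonneg (le_max_right _ _)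
  set g : ℝ → EReal := fun x => ⨅ q : {q : ℚ // (q : ℝ) < x}, h q with hg
  have gle : ∀ {x : ℝ} {q : ℚ}, (q : ℝ) < x → g x ≤ h q := by
    intro x q hq
    exact iInf_le (fun q : {q : ℚ // (q : ℝ) < x} => h q) ⟨q, hq⟩
  have leg : ∀ {x : ℝ} {c : EReal}, (∀ q : ℚ, (q : ℝ) < x → c ≤ h q) → c ≤ g x := by
    intro x c hc
    exact le_iInf fun q => hc q q.2
  have ganti : Antitone g := by
    intro x y hxy
    exact leg fun q hq => gle (hq.trans_le hxy)
  have hneg : ∀ q : ℚ, (q : ℝ) ≤ 0 → Tendsto (fun n => ψ (φ n) 0) atTop (nhds (h q)) := by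
    intro q hq
    have := hl q
    rwa [max_eq_right hq] at this
  have hq0 : ∀ q : ℚ, (q : ℝ) ≤ 0 → h q = h (-1) := by
    intro q hq
    exact tendsto_nhds_unique (hneg q hq) (hneg (-1) (by norm_num))
  have g0 : g 0 = h (-1) := by
    apply le_antisymm
    · exact gle (by norm_num)
    · exact leg fun q hq => (hq0 q hq.le).ge
  have hA' : h (-1) ≤ A := le_of_tendsto' (hneg (-1) (by norm_num)) fun n => hA _
  have hK' : (K : EReal) ≤ h (-1) := ge_of_tendsto' (hneg (-1) (by norm_num)) fun n => hK _
  -- lower bound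
  have low : ∀ (y z : ℝ), y < z → 0 ≤ z → ∀ c : EReal, c < g z → ∀ x, |x| ≤ max y 0 →
      ∀ᶠ n in atTop, c < ψ (φ n) x := by
    intro y z hyz hz c hc x hx
    obtain ⟨q, hq1, hq2⟩ := exists_rat_btwn hyz
    have := (hl q).eventually (lt_mem_nhds (hc.trans_le (gle hq2)))
    filter_upwards [this] with n hn
    refine hn.trans_le (sc0_anti (hψ _) ?_)
    rw [habs]
    exact hx.trans (max_le_max hq1.le le_rfl)
  refine ⟨φ, hφ, fun x => g |x|, ⟨?_, ⟨0, ?_⟩, ?_, ?_, ?_⟩, ?_, ?_, ?_⟩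
  · intro x
    refine lt_of_le_of_lt ((ganti (abs_nonneg x)).trans (g0.le.trans hA')) (EReal.coe_lt_top A)
  · simp only [abs_zero, g0]
    intro hb
    rw [hb] at hK'
    simp at hK'
  · intro x c hc
    have hc' : g |x| < c := hc
    rw [hg] at hc'
    simp only [iInf_lt_iff] at hc'
    obtain ⟨⟨q, hq⟩, hqc⟩ := hc'
    have : ∀ᶠ y in nhds x, (q : ℝ) < |y| := continuous_abs.continuousAt.eventually (lt_mem_nhds hq)
    filter_upwards [this] with y hy
    exact (gle hy).trans_lt hqc
  · intro x y t ht0 ht1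
    rcases eq_or_lt_of_le ht0 with rfl | ht0
    · simp
    rcases eq_or_lt_of_le ht1 with rfl | ht1
    · simp
    apply leg
    intro q hq
    -- choose s
    obtain ⟨s, hs0, hs1, hs⟩ : ∃ s : ℝ, 0 ≤ s ∧ s < 1 ∧ s * |t * x + (1 - t) * y| ≥ q := by
      by_cases hz : q ≤ 0
      · exact ⟨0, le_rfl, one_pos, by simpa using hz⟩
      · push Not at hz
        have hz' : (0 : ℝ) < q := by exact_mod_cast hz
        refine ⟨q / |t * x + (1 - t) * y|, by positivity, ?_, ?_⟩
        · rw [div_lt_one (hz'.trans hq)]; exact hq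
        · rw [div_mul_cancel₀ _ (hz'.trans hq).ne']
    have lowx : ∀ x : ℝ, ∀ c : EReal, c < g |x| → ∀ᶠ n in atTop, c < ψ (φ n) (s * x) := by
      intro x c hc
      by_cases hx : x = 0
      · subst hx
        simp only [abs_zero, mul_zero] at hc ⊢
        rw [g0] at hc
        exact (hneg (-1) (by norm_num)).eventually (lt_mem_nhds hc)
      · have : 0 < |x| := abs_pos.2 hx
        refine low (s * |x|) |x| (by nlinarith) this.le c hc _ ?_
        rw [abs_mul, abs_of_nonneg hs0]
        exact le_max_left _ _
    have key : ∀ a b : ℝ, (a : EReal) < g |x| → (b : EReal) < g |y| →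
        ((t * a + (1 - t) * b : ℝ) : EReal) ≤ h q := by
      intro a b ha hb
      refine ge_of_tendsto (hl q) ?_
      filter_upwards [lowx x a ha, lowx y b hb] with n hna hnb
      have h1 := (hψ (φ n)).2.2.2.1 (s * x) (s * y) t ht0.le ht1.le
      have h2 : ψ (φ n) (t * (s * x) + (1 - t) * (s * y)) ≤ ψ (φ n) (max (q : ℝ) 0) := by
        apply sc0_anti (hψ _)
        rw [habs]
        have e : t * (s * x) + (1 - t) * (s * y) = s * (t * x + (1 - t) * y) := by ring
        rw [e, abs_mul, abs_of_nonneg hs0]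
        exact max_le hs (by positivity)
      refine le_trans ?_ (h1.trans h2)
      rw [EReal.coe_add, EReal.coe_mul, EReal.coe_mul]
      have t1 : (0 : EReal) ≤ (t : EReal) := by exact_mod_cast ht0.le
      have t2 : (0 : EReal) ≤ ((1 - t : ℝ) : EReal) := by exact_mod_cast (by linarith : (0 : ℝ) ≤ 1 - t)
      exact add_le_add (mul_le_mul_of_nonneg_left hna.le t1) (mul_le_mul_of_nonneg_left hnb.le t2)
    have gt : ∀ x, g |x| ≠ ⊤ := fun x =>
      (lt_of_le_of_lt ((ganti (abs_nonneg x)).trans (g0.le.trans hA')) (EReal.coe_lt_top A)).ne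
    show (t : EReal) * g |x| + ((1 - t : ℝ) : EReal) * g |y| ≤ h q
    rcases hx : g |x| with _ | _ | a
    · change (t : EReal) * ⊥ + _ ≤ _
      rw [EReal.coe_mul_bot_of_pos ht0]; simp
    · exact absurd hx (gt x)
    rcases hy : g |y| with _ | _ | b
    · change _ + ((1 - t : ℝ) : EReal) * ⊥ ≤ _
      rw [EReal.coe_mul_bot_of_pos (by linarith)]; simp
    · exact absurd hy (gt y)
    change ((t : ℝ) : EReal) * ((a : ℝ) : EReal) + ((1 - t : ℝ) : EReal) * ((b : ℝ) : EReal) ≤ _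
    rw [← EReal.coe_mul, ← EReal.coe_mul, ← EReal.coe_add]
    have hx' : g |x| = (a : ℝ) := hx
    have hy' : g |y| = (b : ℝ) := hy
    apply le_of_forall_lt
    intro c hc
    rcases c with _ | _ | c
    · have := key (a - 1) (b - 1) (by rw [hx']; exact_mod_cast by linarith)
        (by rw [hy']; exact_mod_cast by linarith)
      exact lt_of_lt_of_le (EReal.bot_lt_coe _) this
    · exact absurd hc (by exact not_top_lt)
    · have hc' : c < t * a + (1 - t) * b := by exact_mod_cast (show ((c : ℝ) : EReal) < _ from hc)
      set e := (t * a + (1 - t) * b - c) / 2 with he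
      have := key (a - e) (b - e) (by rw [hx']; exact_mod_cast by linarith)
        (by rw [hy']; exact_mod_cast by linarith)
      refine lt_of_lt_of_le ?_ this
      change ((c : ℝ) : EReal) < _
      exact_mod_cast by nlinarith
  · intro x; simp
  · simpa [g0] using hA'
  · intro z zn hz
    apply leg
    intro q hq
    have : ∀ᶠ n in atTop, (q : ℝ) < |zn n| := hz.abs.eventually (lt_mem_nhds hq)
    rw [← (hl q).limsup_eq]
    refine limsup_le_limsup ?_
    filter_upwards [this] with n hn
    apply sc0_anti (hψ _)
    rw [habs]
    exact max_le hn.le (abs_nonneg _)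
  · have hcount := ganti.countable_not_continuousAt
    have hc2 : ({x | ¬ ContinuousAt g x} ∪ Neg.neg ⁻¹' {x | ¬ ContinuousAt g x}).Countable :=
      hcount.union (hcount.preimage neg_injective)
    filter_upwards [hc2.ae_notMem volume] with x hx
    have hcont : ContinuousAt g |x| := by
      by_contra hcon
      apply hx
      rcases abs_choice x with h | h <;> rw [h] at hcon
      · left; exact hcon
      · right; exact hcon
    show g |x| ≤ _
    apply le_of_forall_lt
    intro c hc
    obtain ⟨d, hcd, hdg⟩ := exists_between hc
    have h1 : ∀ᶠ y in nhds |x|, d < g y := hcont.eventually (lt_mem_nhds hdg)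
    have h2 : ∀ᶠ y in nhdsWithin |x| (Ioi |x|), d < g y := h1.filter_mono nhdsWithin_le_nhds
    obtain ⟨y, hy, hxy⟩ := (h2.and self_mem_nhdsWithin).exists
    have := low |x| y hxy ((abs_nonneg x).trans (le_of_lt hxy)) d hy x (le_max_left _ _)
    refine hcd.trans_le (le_liminf_of_le (by isBoundedDefault) ?_)
    exact this.mono fun n hn => hn.le

theorem expE_eq (y : EReal) : expE y = y.exp := by
  rcases y with _ | _ | a
  · change expE ⊥ = _; simp [expE]; rfl
  · change expE ⊤ = _; simp [expE]; rfl
  · change expE ((a : ℝ) : EReal) = EReal.exp ((a : ℝ) : EReal); simp [expE]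

theorem toENN_eq (y : EReal) : toENN y = y.toENNReal := rfl

noncomputable def JJ (A θ : ℝ) (ψ : ℝ → EReal) (μ : Measure ℝ) : ℝ≥0∞ :=
  ∫⁻ x, ((A : EReal) - ψ (x - θ)).toENNReal ∂μ + ∫⁻ x, (ψ x).exp

theorem sc0_meas {ψ : ℝ → EReal} (h : memSC0 ψ) : Measurable ψ := h.2.2.1.measurable

theorem split_pt (A : ℝ) (y : EReal) (hA : 0 ≤ A) (hy : y ≤ A) :
    y.toENNReal + ((A : EReal) - y).toENNReal = ENNReal.ofReal A + (-y).toENNReal := by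
  rcases y with _ | _ | a
  · change (⊥ : EReal).toENNReal + ((A : EReal) - ⊥).toENNReal = _ + (-⊥ : EReal).toENNReal
    simp
  · exact absurd hy (not_le.2 (EReal.coe_lt_top A))
  · change ((a : ℝ) : EReal) ≤ _ at hy
    change ((a : ℝ) : EReal).toENNReal + ((A : EReal) - ((a : ℝ) : EReal)).toENNReal
      = _ + (-((a : ℝ) : EReal)).toENNReal
    have hy' : a ≤ A := by exact_mod_cast hy
    rw [← EReal.coe_sub, ← EReal.coe_neg]
    simp only [EReal.real_coe_toENNReal]
    rcases le_total 0 a with h | h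
    · rw [ENNReal.ofReal_of_nonpos (by linarith : -a ≤ 0), add_zero, ← ENNReal.ofReal_add h (by linarith)]
      congr 1; ring
    · rw [ENNReal.ofReal_of_nonpos h, zero_add, ← ENNReal.ofReal_add hA (by linarith)]
      congr 1

theorem Psi_eq {ψ : ℝ → EReal} (h : memSC0 ψ) (μ : Measure ℝ) [IsProbabilityMeasure μ] (A θ : ℝ)
    (hA : 0 ≤ A) (h0 : ψ 0 ≤ A) : Psi θ ψ μ = (A : EReal) - (JJ A θ ψ μ : EReal) := by
  have hm := sc0_meas h
  have hle : ∀ x, ψ x ≤ A := fun x => (sc0_le0 h x).trans h0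
  unfold Psi eIntegral JJ
  simp only [expE_eq, toENN_eq]
  have hm' : Measurable fun x => ψ (x - θ) := hm.comp (measurable_id.sub_const θ)
  have e1 : ∫⁻ x, (ψ (x - θ)).toENNReal ∂μ + ∫⁻ x, ((A : EReal) - ψ (x - θ)).toENNReal ∂μ
      = ENNReal.ofReal A + ∫⁻ x, (-ψ (x - θ)).toENNReal ∂μ := by
    rw [← lintegral_add_left hm'.ereal_toENNReal]
    simp only [split_pt A _ hA (hle _)]
    rw [lintegral_add_left measurable_const]
    simp
  have e2 : ∫⁻ x, (ψ (x - θ)).toENNReal ∂μ ≤ ENNReal.ofReal A := by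
    calc _ ≤ ∫⁻ x, ENNReal.ofReal A ∂μ := lintegral_mono fun x => by
            have := EReal.toENNReal_le_toENNReal (hle (x - θ)); simpa using this
      _ = _ := by simp
  generalize ∫⁻ x, (ψ (x - θ)).toENNReal ∂μ = P at *
  generalize ∫⁻ x, ((A : EReal) - ψ (x - θ)).toENNReal ∂μ = Q at *
  generalize ∫⁻ x, (-ψ (x - θ)).toENNReal ∂μ = N at *
  generalize ∫⁻ x, (ψ x).exp = E at *
  have hP : P ≠ ⊤ := (e2.trans_lt ENNReal.ofReal_lt_top).ne
  lift P to ℝ≥0 using hP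
  lift A to ℝ≥0 using hA
  rw [ENNReal.ofReal_coe_nnreal] at e1
  induction E with
  | top => simp
  | coe E =>
  induction N with
  | top =>
    have : Q = ⊤ := by simpa using e1
    subst this
    simp
  | coe N =>
    have : Q ≠ ⊤ := by
      rintro rfl
      rw [_root_.add_top] at e1
      exact ENNReal.add_ne_top.2 ⟨ENNReal.coe_ne_top, ENNReal.coe_ne_top⟩ e1.symm
    lift Q to ℝ≥0 using this
    have e1' : (P : ℝ) + Q = A + N := by exact_mod_cast e1
    rw [← ENNReal.coe_add]
    simp only [EReal.coe_nnreal_eq_coe_real]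
    norm_cast
    push_cast
    linarith

/-- nondegeneracy -/
theorem nondeg (μ : Measure ℝ) (hA : CondA μ) :
    ∃ δ : ℝ, 0 < δ ∧ ∃ ε : ℝ, 0 < ε ∧ ∀ θ : ℝ, ENNReal.ofReal ε ≤ μ {x | δ ≤ |x - θ|} := by
  obtain ⟨hp, hd, hi⟩ := hA
  have hint : Integrable (fun x : ℝ => x) μ := by
    refine ⟨measurable_id.aestronglyMeasurable, ?_⟩
    unfold HasFiniteIntegral
    simpa [Real.enorm_eq_ofReal_abs] using hi
  set m := ∫ x, x ∂μ with hm
  have hz : ∫ x, (x - m) ∂μ = 0 := by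
    rw [integral_sub hint (integrable_const _)]; simp [hm]
  have hdir : ¬ (∀ᵐ x ∂μ, x = m) := by
    intro hae
    apply hd m
    ext s hs
    rw [Measure.dirac_apply' _ hs]
    by_cases hms : m ∈ s
    · simp only [indicator, hms, if_true, Pi.one_apply]
      have hc : ∀ᵐ x ∂μ, x ∈ s := hae.mono fun x hx => hx ▸ hms
      rw [measure_congr (eventuallyEq_univ.2 hc : s =ᵐ[μ] univ)]; simp
    · simp only [indicator, hms, if_false]
      refine measure_mono_null (t := {x | ¬ x = m}) ?_ hae
      intro x hx hxm
      exact hms (hxm ▸ hx)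
  have h1 : 0 < μ (Iio m) := by
    rw [pos_iff_ne_zero]
    intro h0
    apply hdir
    have hnn : 0 ≤ᵐ[μ] fun x => x - m := by
      have : ∀ᵐ x ∂μ, x ∉ Iio m := measure_eq_zero_iff_ae_notMem.1 h0
      filter_upwards [this] with x hx
      simpa using hx
    have := (integral_eq_zero_iff_of_nonneg_ae hnn (hint.sub (integrable_const _))).1 hz
    filter_upwards [this] with x hx
    simpa [sub_eq_zero] using hx
  have h2 : 0 < μ (Ioi m) := by
    rw [pos_iff_ne_zero]
    intro h0
    apply hdir
    have hnn : 0 ≤ᵐ[μ] fun x => m - x := by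
      have : ∀ᵐ x ∂μ, x ∉ Ioi m := measure_eq_zero_iff_ae_notMem.1 h0
      filter_upwards [this] with x hx
      simpa using hx
    have hz' : ∫ x, (m - x) ∂μ = 0 := by
      rw [← neg_zero, ← hz, ← integral_neg]; simp
    have := (integral_eq_zero_iff_of_nonneg_ae hnn ((integrable_const _).sub hint)).1 hz'
    filter_upwards [this] with x hx
    have : m - x = 0 := hx
    linarith
  have u1 : Iio m = ⋃ n : ℕ, Iic (m - 1 / ((n : ℝ) + 1)) := by
    ext x
    simp only [mem_Iio, mem_iUnion, mem_Iic]
    constructor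
    · intro hx
      obtain ⟨n, hn⟩ := exists_nat_one_div_lt (sub_pos.2 hx)
      exact ⟨n, by linarith⟩
    · rintro ⟨n, hn⟩
      have : 0 < 1 / ((n : ℝ) + 1) := by positivity
      linarith
  have u2 : Ioi m = ⋃ n : ℕ, Ici (m + 1 / ((n : ℝ) + 1)) := by
    ext x
    simp only [mem_Ioi, mem_iUnion, mem_Ici]
    constructor
    · intro hx
      obtain ⟨n, hn⟩ := exists_nat_one_div_lt (sub_pos.2 hx)
      exact ⟨n, by linarith⟩
    · rintro ⟨n, hn⟩
      have : 0 < 1 / ((n : ℝ) + 1) := by positivity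
      linarith
  rw [u1] at h1
  rw [u2] at h2
  obtain ⟨n1, h1⟩ := exists_measure_pos_of_not_measure_iUnion_null h1.ne'
  obtain ⟨n2, h2⟩ := exists_measure_pos_of_not_measure_iUnion_null h2.ne'
  refine ⟨min (1 / ((n1 : ℝ) + 1)) (1 / ((n2 : ℝ) + 1)), by positivity,
    min (μ (Iic (m - 1 / ((n1 : ℝ) + 1)))).toReal (μ (Ici (m + 1 / ((n2 : ℝ) + 1)))).toReal,
    lt_min (ENNReal.toReal_pos h1.ne' (measure_ne_top _ _))
      (ENNReal.toReal_pos h2.ne' (measure_ne_top _ _)), ?_⟩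
  intro θ
  rcases le_total m θ with h | h
  · refine (ENNReal.ofReal_le_ofReal (min_le_left _ _)).trans ?_
    rw [ENNReal.ofReal_toReal (measure_ne_top _ _)]
    apply measure_mono
    intro x hx
    simp only [mem_Iic, mem_ofPred_eq] at hx ⊢
    refine (min_le_left _ _).trans ?_
    rw [abs_sub_comm]
    exact le_trans (by linarith) (le_abs_self _)
  · refine (ENNReal.ofReal_le_ofReal (min_le_right _ _)).trans ?_
    rw [ENNReal.ofReal_toReal (measure_ne_top _ _)]
    apply measure_mono
    intro x hx
    simp only [mem_Ici, mem_ofPred_eq] at hx ⊢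
    refine (min_le_right _ _).trans ?_
    exact le_trans (by linarith) (le_abs_self _)

theorem JJ_le {A K : ℝ} {J : ℝ≥0∞} (h : (K : EReal) ≤ (A : EReal) - (J : EReal)) :
    J ≤ ENNReal.ofReal (A - K) := by
  induction J with
  | top => simp at h
  | coe J =>
    rw [EReal.coe_nnreal_eq_coe_real, ← EReal.coe_sub, EReal.coe_le_coe_iff] at h
    rw [← ENNReal.ofReal_coe_nnreal]
    exact ENNReal.ofReal_le_ofReal (by linarith)

theorem le_of_JJ {A K : ℝ} {J : ℝ≥0∞} (hAK : K ≤ A) (h : J ≤ ENNReal.ofReal (A - K)) :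
    (K : EReal) ≤ (A : EReal) - (J : EReal) := by
  lift J to ℝ≥0 using (h.trans_lt ENNReal.ofReal_lt_top).ne
  rw [EReal.coe_nnreal_eq_coe_real, ← EReal.coe_sub, EReal.coe_le_coe_iff]
  rw [← ENNReal.ofReal_coe_nnreal, ENNReal.ofReal_le_ofReal_iff (by linarith)] at h
  linarith

theorem exp_lower {ψ : ℝ → EReal} (h : memSC0 ψ) (r c : ℝ) (hr : 0 ≤ r) (hc : (c : EReal) ≤ ψ r) :
    ENNReal.ofReal (2 * r * Real.exp c) ≤ ∫⁻ x, (ψ x).exp := by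
  calc ENNReal.ofReal (2 * r * Real.exp c)
      = ∫⁻ x in Icc (-r) r, ENNReal.ofReal (Real.exp c) := by
        rw [setLIntegral_const, Real.volume_Icc, ← ENNReal.ofReal_mul (Real.exp_nonneg c)]
        congr 1; ring
    _ ≤ ∫⁻ x in Icc (-r) r, (ψ x).exp := by
        refine setLIntegral_mono' measurableSet_Icc fun x hx => ?_
        rw [← EReal.exp_coe]
        apply EReal.exp_monotone
        refine hc.trans (sc0_anti h ?_)
        rw [abs_of_nonneg hr]
        exact abs_le.2 hx
    _ ≤ _ := setLIntegral_le_lintegral _ _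

theorem mu_lower {ψ : ℝ → EReal} (h : memSC0 ψ) (μ : Measure ℝ) (A θ r : ℝ) (hr : 0 ≤ r)
    (S : Set ℝ) (hS : MeasurableSet S) (hSr : ∀ x ∈ S, r ≤ |x - θ|) :
    ((A : EReal) - ψ r).toENNReal * μ S ≤ ∫⁻ x, ((A : EReal) - ψ (x - θ)).toENNReal ∂μ := by
  rw [← setLIntegral_const]
  refine le_trans (setLIntegral_mono' hS fun x hx => ?_) (setLIntegral_le_lintegral _ _)
  apply EReal.toENNReal_le_toENNReal
  apply EReal.sub_le_sub le_rfl
  apply sc0_anti h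
  rw [abs_of_nonneg hr]
  exact hSr x hx

theorem M_bound (μ : Measure ℝ) (hA : CondA μ) (K : ℝ) (hK : 0 ≤ K) :
    ∃ A : ℝ, 0 ≤ A ∧ ∀ (θ : ℝ) (ψ : ℝ → EReal), memSC0 ψ → ((-K : ℝ) : EReal) ≤ Psi θ ψ μ →
      ψ 0 ≤ A := by
  obtain ⟨δ, hδ, ε, hε, hμ⟩ := nondeg μ hA
  have := hA.1
  have hpoly : ∀ᶠ M : ℝ in atTop, (M + K) * (1 + (M + K) / ε) < 2 * δ * Real.exp (M - 1) := by
    have h1 := Polynomial.tendsto_div_exp_atTop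
      ((Polynomial.X + Polynomial.C K) * (1 + (Polynomial.X + Polynomial.C K) * Polynomial.C ε⁻¹))
    have hpos : 0 < 2 * δ * Real.exp (-1) := by positivity
    filter_upwards [h1.eventually (gt_mem_nhds hpos)] with M hM
    simp only [Polynomial.eval_mul, Polynomial.eval_add, Polynomial.eval_X, Polynomial.eval_C,
      Polynomial.eval_one] at hM
    rw [div_lt_iff₀ (Real.exp_pos _), mul_assoc, ← Real.exp_add] at hM
    rw [div_eq_mul_inv, show M - 1 = -1 + M by ring]
    exact hM
  obtain ⟨A0, hA0⟩ := eventually_atTop.1 hpoly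
  refine ⟨max A0 0, le_max_right _ _, ?_⟩
  intro θ ψ hψ hP
  by_contra hcon
  push Not at hcon
  obtain ⟨M, hM⟩ : ∃ M : ℝ, ψ 0 = M := by
    refine ⟨(ψ 0).toReal, (EReal.coe_toReal (hψ.1 0).ne ?_).symm⟩
    exact (lt_of_le_of_lt bot_le hcon).ne'
  rw [hM] at hcon
  have hcon' : max A0 0 < M := by exact_mod_cast hcon
  have hM0 : 0 ≤ M := (le_max_right _ _).trans hcon'.le
  rw [Psi_eq hψ μ M θ hM0 hM.le] at hP
  have hJ := JJ_le hP
  have hS : MeasurableSet {x : ℝ | δ ≤ |x - θ|} := by measurability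
  have hb := (mu_lower hψ μ M θ δ hδ.le _ hS (fun x hx => hx)).trans
    ((le_add_right le_rfl).trans hJ)
  have hb2 := (mul_le_mul_right (hμ θ) _).trans hb
  have hψδ : ψ δ ≠ ⊥ := by
    intro hbot
    rw [hbot] at hb2
    simp at hb2
    rw [ENNReal.top_mul (by simpa using hε)] at hb2
    simp at hb2
  obtain ⟨m, hm⟩ : ∃ m : ℝ, ψ δ = m := ⟨(ψ δ).toReal, (EReal.coe_toReal (hψ.1 δ).ne hψδ).symm⟩
  have hmM : m ≤ M := by
    have := sc0_le0 hψ δ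
    rw [hm, hM] at this
    exact_mod_cast this
  have hd : (M - m) * ε ≤ M + K := by
    rw [hm, ← EReal.coe_sub, EReal.real_coe_toENNReal, ← ENNReal.ofReal_mul (by linarith),
      ENNReal.ofReal_le_ofReal_iff (by linarith)] at hb2
    linarith
  have hd' : M - m ≤ (M + K) / ε := by rwa [le_div_iff₀ hε]
  set t := 1 / (1 + (M - m)) with ht
  have hden : 0 < 1 + (M - m) := by linarith
  have ht0 : 0 < t := by positivity
  have ht1 : t ≤ 1 := by rw [ht, div_le_one hden]; linarith
  have htt : t * (1 + (M - m)) = 1 := by rw [ht]; field_simp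
  have hc := hψ.2.2.2.1 δ 0 t ht0.le ht1
  rw [hm, hM, ← EReal.coe_mul, ← EReal.coe_mul, ← EReal.coe_add, mul_zero, add_zero] at hc
  have hc2 : ((M - 1 : ℝ) : EReal) ≤ ψ (t * δ) := by
    refine le_trans ?_ hc
    exact_mod_cast by nlinarith
  have he := (exp_lower hψ (t * δ) (M - 1) (by positivity) hc2).trans
    ((le_add_left le_rfl).trans hJ)
  rw [ENNReal.ofReal_le_ofReal_iff (by linarith)] at he
  have hfin := hA0 M ((le_max_left _ _).trans hcon'.le)
  have : 2 * δ * Real.exp (M - 1) ≤ (M + K) * (1 + (M - m)) := by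
    calc 2 * δ * Real.exp (M - 1) = (2 * (t * δ) * Real.exp (M - 1)) * (1 + (M - m)) := by
          linear_combination (-(2 * δ * Real.exp (M - 1))) * htt
      _ ≤ (M - -K) * (1 + (M - m)) := mul_le_mul_of_nonneg_right he hden.le
      _ = _ := by ring
  have h3 : (M + K) * (1 + (M - m)) ≤ (M + K) * (1 + (M + K) / ε) :=
    mul_le_mul_of_nonneg_left (by linarith) (by linarith)
  linarith

theorem theta_bound (μ : Measure ℝ) (hA : CondA μ) (K A : ℝ) (hK : 0 ≤ K) (hA0 : 0 ≤ A) :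
    ∃ T : ℝ, ∀ (θ : ℝ) (ψ : ℝ → EReal), memSC0 ψ → ((-K : ℝ) : EReal) ≤ Psi θ ψ μ →
      ψ 0 ≤ A → |θ| ≤ T := by
  have := hA.1
  obtain ⟨R, hR⟩ : ∃ R : ℕ, (1 / 2 : ℝ≥0∞) < μ (Icc (-(R : ℝ)) R) := by
    have hmono : Monotone fun n : ℕ => Icc (-(n : ℝ)) n := by
      intro a b hab
      have : (a : ℝ) ≤ b := by exact_mod_cast hab
      exact Icc_subset_Icc (by linarith) this
    have hU : ⋃ n : ℕ, Icc (-(n : ℝ)) n = univ := by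
      rw [eq_univ_iff_forall]
      intro x
      obtain ⟨n, hn⟩ := exists_nat_ge |x|
      exact mem_iUnion.2 ⟨n, abs_le.1 hn⟩
    have := tendsto_measure_iUnion_atTop (μ := μ) hmono
    rw [hU, measure_univ] at this
    exact (this.eventually (lt_mem_nhds (by simp))).exists
  refine ⟨R + (A + K) * Real.exp (A + 2 * K), ?_⟩
  intro θ ψ hψ hP h0
  by_contra hcon
  push Not at hcon
  rw [Psi_eq hψ μ A θ hA0 h0] at hP
  have hJ := JJ_le hP
  set r := |θ| - R with hr
  have hE : 0 ≤ (A + K) * Real.exp (A + 2 * K) := by positivity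
  have hr0 : 0 < r := by linarith
  have hb := (mu_lower hψ μ A θ r hr0.le (Icc (-(R : ℝ)) R) measurableSet_Icc (by
    intro x hx
    have h1 : |x| ≤ R := abs_le.2 hx
    have h2 := abs_sub_abs_le_abs_sub θ x
    rw [abs_sub_comm] at h2
    linarith)).trans ((le_add_right le_rfl).trans hJ)
  have hb2 := (mul_le_mul_right hR.le _).trans hb
  have hψr : ψ r ≠ ⊥ := by
    intro hbot
    rw [hbot] at hb2
    simp at hb2
  obtain ⟨m, hm⟩ : ∃ m : ℝ, ψ r = m := ⟨(ψ r).toReal, (EReal.coe_toReal (hψ.1 r).ne hψr).symm⟩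
  have hmA : m ≤ A := by
    have := (sc0_le0 hψ r).trans h0
    rw [hm] at this
    exact_mod_cast this
  have half : (1 / 2 : ℝ≥0∞) = ENNReal.ofReal (1 / 2) := by
    rw [ENNReal.ofReal_div_of_pos (by norm_num)]; simp
  rw [hm, half, ← EReal.coe_sub, EReal.real_coe_toENNReal, ← ENNReal.ofReal_mul (by linarith),
      ENNReal.ofReal_le_ofReal_iff (by linarith)] at hb2
  have he := (exp_lower hψ r (-(A + 2 * K)) hr0.le (by
    rw [hm]; exact_mod_cast by linarith)).trans ((le_add_left le_rfl).trans hJ)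
  rw [ENNReal.ofReal_le_ofReal_iff (by linarith), Real.exp_neg] at he
  have hep := Real.exp_pos (A + 2 * K)
  rw [← div_eq_mul_inv, div_le_iff₀ hep] at he
  have : (A - -K) * Real.exp (A + 2 * K) < r := by
    rw [sub_neg_eq_add]; linarith
  linarith

theorem base_pt (μ : Measure ℝ) (hA : CondA μ) :
    ∃ K : ℝ, 0 ≤ K ∧ ((-K : ℝ) : EReal) < Lsup μ := by
  have := hA.1
  have hmem : memSC0 (fun x : ℝ => ((-|x| : ℝ) : EReal)) := by
    refine ⟨fun x => EReal.coe_lt_top _, ⟨0, EReal.coe_ne_bot _⟩, ?_, ?_, ?_⟩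
    · apply Continuous.upperSemicontinuous
      exact continuous_coe_real_ereal.comp (by fun_prop)
    · intro x y t h0 h1
      rw [← EReal.coe_mul, ← EReal.coe_mul, ← EReal.coe_add, EReal.coe_le_coe_iff]
      have := abs_add_le (t * x) ((1 - t) * y)
      rw [abs_mul, abs_mul, abs_of_nonneg h0, abs_of_nonneg (by linarith : 0 ≤ 1 - t)] at this
      linarith
    · intro x; simp
  have hfin : JJ 0 0 (fun x : ℝ => ((-|x| : ℝ) : EReal)) μ ≠ ⊤ := by
    unfold JJ
    apply ENNReal.add_ne_top.2
    constructor
    · refine (lt_of_le_of_lt (le_of_eq ?_) hA.2.2).ne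
      refine lintegral_congr fun x => ?_
      rw [← EReal.coe_sub]; simp
    · have hi : Integrable (fun x : ℝ => Real.exp (-|x|)) := by
        rw [← integrableOn_univ, ← Iic_union_Ioi (a := (0 : ℝ))]
        refine IntegrableOn.union ?_ ?_
        · refine (integrableOn_exp_Iic 0).congr_fun (fun x hx => ?_) measurableSet_Iic
          have hx' : x ≤ 0 := hx
          simp [abs_of_nonpos hx']
        · refine (integrableOn_exp_neg_Ioi 0).congr_fun (fun x hx => ?_) measurableSet_Ioi
          have hx' : 0 < x := hx
          simp [abs_of_pos hx']
      simp only [EReal.exp_coe]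
      exact hi.lintegral_lt_top.ne
  have hle : Psi 0 (fun x : ℝ => ((-|x| : ℝ) : EReal)) μ ≤ Lsup μ := by
    unfold Lsup Ltheta
    refine le_trans ?_ (le_iSup _ (0 : ℝ))
    exact le_biSup (fun ψ => Psi 0 ψ μ) (i := (fun x : ℝ => ((-|x| : ℝ) : EReal))) hmem
  rw [Psi_eq hmem μ 0 0 le_rfl (by simp)] at hle
  lift JJ 0 0 (fun x : ℝ => ((-|x| : ℝ) : EReal)) μ to ℝ≥0 using hfin with J
  refine ⟨J + 1, by positivity, lt_of_lt_of_le ?_ hle⟩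
  rw [EReal.coe_nnreal_eq_coe_real, ← EReal.coe_sub, EReal.coe_lt_coe_iff]
  linarith

theorem ennreal_le_liminf_add (u v : ℕ → ℝ≥0∞) :
    liminf u atTop + liminf v atTop ≤ liminf (fun n => u n + v n) atTop := by
  simp only [liminf_eq_iSup_iInf_of_nat]
  rw [ENNReal.iSup_add_iSup_of_monotone]
  · refine iSup_mono fun n => le_iInf₂ fun i hi => ?_
    exact add_le_add (iInf₂_le i hi) (iInf₂_le i hi)
  · intro a b hab
    exact le_iInf₂ fun i hi => iInf₂_le i (hab.trans hi)
  · intro a b hab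
    exact le_iInf₂ fun i hi => iInf₂_le i (hab.trans hi)

theorem main_aux (μ : Measure ℝ) (hA : CondA μ) :
    ∃ (A θ : ℝ) (ψ : ℝ → EReal), memSC0 ψ ∧ Psi θ ψ μ ≤ A ∧ Lsup μ ≤ Psi θ ψ μ := by
  have := hA.1
  obtain ⟨K, hK0, hK⟩ := base_pt μ hA
  obtain ⟨A, hA0, hAb⟩ := M_bound μ hA K hK0
  obtain ⟨T, hT⟩ := theta_bound μ hA K A hK0 hA0
  obtain ⟨u, -, hu, hul⟩ := exists_seq_strictMono_tendsto' hK
  have hex : ∀ n, ∃ (θ : ℝ) (ψ : ℝ → EReal), memSC0 ψ ∧ u n < Psi θ ψ μ := by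
    intro n
    have := (hu n).2
    unfold Lsup Ltheta at this
    simp only [lt_iSup_iff] at this
    obtain ⟨θ, ψ, h1, h2⟩ := this
    exact ⟨θ, ψ, h1, h2⟩
  choose θ ψ hψ hPsi using hex
  have hP : ∀ n, ((-K : ℝ) : EReal) ≤ Psi (θ n) (ψ n) μ := fun n => ((hu n).1.trans (hPsi n)).le
  have hψA : ∀ n, ψ n 0 ≤ A := fun n => hAb _ _ (hψ n) (hP n)
  have hθ : ∀ n, θ n ∈ Icc (-T) T := fun n => abs_le.1 (hT _ _ (hψ n) (hP n) (hψA n))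
  have hJ : ∀ n, (u n : EReal) < (A : EReal) - (JJ A (θ n) (ψ n) μ : EReal) := fun n => by
    rw [← Psi_eq (hψ n) μ A (θ n) hA0 (hψA n)]; exact hPsi n
  have hψK : ∀ n, ((-(A + K + 1) + A - 1: ℝ) : EReal) ≤ ψ n 0 := by
    intro n
    by_contra hcon
    push Not at hcon
    have h1 := JJ_le (((hu n).1.trans (hJ n)).le)
    have h2 := (mu_lower (hψ n) μ A (θ n) 0 le_rfl univ MeasurableSet.univ (by simp)).trans
      ((le_add_right le_rfl).trans h1)
    rw [measure_univ, mul_one] at h2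
    have h3 : ((A + K + 1 : ℝ) : EReal) ≤ (A : EReal) - ψ n 0 := by
      refine le_trans ?_ (EReal.sub_le_sub le_rfl hcon.le)
      exact_mod_cast by linarith
    have h4 := (EReal.toENNReal_le_toENNReal h3).trans h2
    rw [EReal.real_coe_toENNReal, ENNReal.ofReal_le_ofReal_iff (by linarith)] at h4
    linarith
  obtain ⟨θ', -, φ1, hφ1, hθ'⟩ := isCompact_Icc.tendsto_subseq hθ
  obtain ⟨φ2, hφ2, ψ', hψ', hψ'A, hlim, hlow⟩ := limit_exists (fun n => ψ (φ1 n)) (fun n => hψ _) A _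
    (fun n => hψA _) (fun n => hψK _)
  have hPe := Psi_eq hψ' μ A θ' hA0 hψ'A
  refine ⟨A, θ', ψ', hψ', ?_, ?_⟩
  · rw [hPe]
    refine (EReal.sub_le_sub le_rfl (EReal.coe_ennreal_nonneg _)).trans ?_
    simp
  rw [hPe]
  have hφ : Tendsto (fun n => φ1 (φ2 n)) atTop atTop := (hφ1.comp hφ2).tendsto_atTop
  -- Fatou
  have F1 : ∫⁻ x, ((A : EReal) - ψ' (x - θ')).toENNReal ∂μ ≤
      liminf (fun n => ∫⁻ x, ((A : EReal) - ψ (φ1 (φ2 n)) (x - θ (φ1 (φ2 n)))).toENNReal ∂μ) atTop := by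
    have hk : Antitone fun y : EReal => ((A : EReal) - y).toENNReal := fun a b hab =>
      EReal.toENNReal_le_toENNReal (EReal.sub_le_sub le_rfl hab)
    have hkc : Continuous fun y : EReal => ((A : EReal) - y).toENNReal := by
      apply EReal.continuous_toENNReal.comp
      rw [continuous_iff_continuousAt]
      intro y
      have h1 : ContinuousAt (fun p : EReal × EReal => p.1 + p.2) ((A : EReal), -y) :=
        EReal.continuousAt_add (by simp) (by simp)
      exact ContinuousAt.comp (f := fun y : EReal => ((A : EReal), -y)) h1
        (continuousAt_const.prodMk continuous_neg.continuousAt)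
    refine le_trans (lintegral_mono fun x => ?_) (lintegral_liminf_le fun n => ?_)
    · have h1 := hlim (x - θ') (fun n => x - θ (φ1 (φ2 n)))
        (tendsto_const_nhds.sub (hθ'.comp hφ2.tendsto_atTop))
      refine (hk h1).trans ?_
      exact (hk.map_limsup_of_continuousAt _ hkc.continuousAt).le
    · exact hkc.measurable.comp ((sc0_meas (hψ _)).comp (measurable_id.sub_const _))
  have F2 : ∫⁻ x, (ψ' x).exp ≤ liminf (fun n => ∫⁻ x, (ψ (φ1 (φ2 n)) x).exp) atTop := by
    refine le_trans (lintegral_mono_ae ?_) (lintegral_liminf_le fun n => ?_)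
    · filter_upwards [hlow] with x hx
      refine (EReal.exp_monotone hx).trans ?_
      exact (EReal.exp_monotone.map_liminf_of_continuousAt _ ENNReal.continuous_exp.continuousAt).le
    · exact EReal.measurable_exp.comp (sc0_meas (hψ _))
  have F : JJ A θ' ψ' μ ≤ liminf (fun n => JJ A (θ (φ1 (φ2 n))) (ψ (φ1 (φ2 n))) μ) atTop :=
    (add_le_add F1 F2).trans (ennreal_le_liminf_add _ _)
  apply le_of_forall_lt
  intro v hv
  obtain ⟨w, hvw, hw⟩ := exists_between hv
  obtain ⟨w', hw', hwL⟩ := exists_between hw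
  refine hvw.trans_le ?_
  have ev : ∀ᶠ n in atTop, w' < u (φ1 (φ2 n)) := (hul.comp hφ).eventually (lt_mem_nhds hwL)
  have hw'A : w' ≤ A := by
    obtain ⟨n, hn⟩ := ev.exists
    refine hn.le.trans ((hJ _).le.trans ?_)
    refine (EReal.sub_le_sub le_rfl (EReal.coe_ennreal_nonneg _)).trans ?_
    simp
  refine hw'.le.trans ?_
  obtain ⟨c, rfl⟩ : ∃ c : ℝ, w' = c := by
    refine ⟨w'.toReal, (EReal.coe_toReal ?_ ?_).symm⟩
    · exact (hw'A.trans_lt (EReal.coe_lt_top _)).ne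
    · exact (lt_of_le_of_lt bot_le hw').ne'
  apply le_of_JJ (by exact_mod_cast hw'A)
  refine F.trans ?_
  refine liminf_le_of_frequently_le ?_
  apply Eventually.frequently
  filter_upwards [ev] with n hn
  exact JJ_le ((hn.trans (hJ _)).le)

/-- Under Condition A, `L(F) = sup_{θ, ψ ∈ SC₀} Ψ(θ, ψ, F)` is finite
and the supremum is attained at some `(θ*(F), ψ*(F)) ∈ ℝ × SC₀`. -/
theorem statement1 (μ : Measure ℝ) (hA : CondA μ) :
    (Lsup μ ≠ ⊤ ∧ Lsup μ ≠ ⊥) ∧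
      ∃ (θ : ℝ) (ψ : ℝ → EReal), memSC0 ψ ∧ Psi θ ψ μ = Lsup μ := by
  obtain ⟨A, θ, ψ, h1, h2, h3⟩ := main_aux μ hA
  obtain ⟨K, -, hK⟩ := base_pt μ hA
  have hle : Psi θ ψ μ ≤ Lsup μ := by
    unfold Lsup Ltheta
    refine le_trans ?_ (le_iSup _ θ)
    exact le_biSup (fun ψ => Psi θ ψ μ) (i := ψ) h1
  refine ⟨⟨?_, ?_⟩, θ, ψ, h1, le_antisymm hle h3⟩
  · exact ((h3.trans h2).trans_lt (EReal.coe_lt_top A)).ne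
  · exact (lt_of_le_of_lt bot_le hK).ne'
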